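/- For every τ ∈ ℍ and every z ∈ ℂ with z ∉ Λ_τ, the τ-derivative of the Weierstrass ℘-function satisfies ∂℘/∂τ(z|τ) = (−i/(4π))[2(ζ(z|τ) − zη₁(τ))℘′(z|τ) + 4(℘(z|τ) − η₁(τ))℘(z|τ) − (2/3)g₂(τ)]. -/

import Mathlib

open Complex Filter Topology Asymptotics

noncomputable section

/-- membership in the lattice `Λ_τ = ℤ + τℤ`. -/
def InLattice (τ z : ℂ) : Prop := ∃ m n : ℤ, z = (m : ℂ) + (n : ℂ) * τ

/-- the half-period generators `ω₀ = 0, ω₁ = 1, ω₂ = τ, ω₃ = 1 + τ`. -/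
def halfp (τ : ℂ) : Fin 4 → ℂ := ![0, 1, τ, 1 + τ]

/-- the Weierstrass elliptic function `℘(z|τ)`. -/
def wp (τ z : ℂ) : ℂ :=
  z⁻¹ ^ 2 + ∑' w : {w : ℤ × ℤ // w ≠ 0},
    ((z - ((w.1.1 : ℂ) + (w.1.2 : ℂ) * τ))⁻¹ ^ 2 - ((w.1.1 : ℂ) + (w.1.2 : ℂ) * τ)⁻¹ ^ 2)

/-- `℘′(z|τ)`, the `z`-derivative of `℘`. -/
def wpd (τ z : ℂ) : ℂ := deriv (wp τ) z

/-- `℘″(z|τ)`. -/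
def wpdd (τ z : ℂ) : ℂ := deriv (wpd τ) z

def e1 (τ : ℂ) : ℂ := wp τ (1 / 2)
def e2 (τ : ℂ) : ℂ := wp τ (τ / 2)
def e3 (τ : ℂ) : ℂ := wp τ ((1 + τ) / 2)

def g2 (τ : ℂ) : ℂ := -4 * (e1 τ * e2 τ + e1 τ * e3 τ + e2 τ * e3 τ)

/-- `zeta` is the Weierstrass zeta function: for each `τ ∈ ℍ`, `zeta τ` is odd, satisfies
`∂ζ/∂z = -℘` off the lattice, and `ζ(z|τ) - 1/z → 0` as `z → 0`. -/
def IsWeierstrassZeta (zeta : ℂ → ℂ → ℂ) : Prop :=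
  ∀ τ : ℂ, 0 < τ.im →
    (∀ z : ℂ, zeta τ (-z) = - zeta τ z) ∧
    (∀ z : ℂ, ¬ InLattice τ z → HasDerivAt (zeta τ) (- wp τ z) z) ∧
    Tendsto (fun z => zeta τ z - z⁻¹) (𝓝[≠] (0 : ℂ)) (𝓝 0)

/-- `eta1 τ = ζ(z+1|τ) - ζ(z|τ)` is the first quasi-period. -/
def IsEta1 (zeta : ℂ → ℂ → ℂ) (eta1 : ℂ → ℂ) : Prop :=
  ∀ τ : ℂ, 0 < τ.im → ∀ z : ℂ, ¬ InLattice τ z →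
    eta1 τ = zeta τ (z + 1) - zeta τ z

/-- `eta2 τ = ζ(z+τ|τ) - ζ(z|τ)` is the second quasi-period. -/
def IsEta2 (zeta : ℂ → ℂ → ℂ) (eta2 : ℂ → ℂ) : Prop :=
  ∀ τ : ℂ, 0 < τ.im → ∀ z : ℂ, ¬ InLattice τ z →
    eta2 τ = zeta τ (z + τ) - zeta τ z

/-- `sigma` is the Weierstrass sigma function: entire, odd, with
`∂/∂z log σ = ζ` off the lattice and `σ(z|τ)/z → 1` as `z → 0`. -/
def IsWeierstrassSigma (zeta sigma : ℂ → ℂ → ℂ) : Prop :=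
  ∀ τ : ℂ, 0 < τ.im →
    (∀ z : ℂ, sigma τ (-z) = - sigma τ z) ∧
    Differentiable ℂ (sigma τ) ∧
    (∀ z : ℂ, ¬ InLattice τ z → HasDerivAt (sigma τ) (zeta τ z * sigma τ z) z) ∧
    Tendsto (fun z => sigma τ z / z) (𝓝[≠] (0 : ℂ)) (𝓝 1)

/-- the Hamiltonian system (142) for `(p(τ), A(τ))` on `V`. -/
def HamSystem (n : Fin 4 → ℂ) (zeta : ℂ → ℂ → ℂ) (eta1 : ℂ → ℂ)
    (V : Set ℂ) (p A : ℂ → ℂ) : Prop :=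
  ∀ τ ∈ V,
    HasDerivAt p ((-Complex.I / (4 * (Real.pi : ℂ))) *
      (2 * A τ - zeta τ (2 * p τ) + 2 * p τ * eta1 τ)) τ ∧
    HasDerivAt A ((Complex.I / (4 * (Real.pi : ℂ))) *
      ((2 * wp τ (2 * p τ) + 2 * eta1 τ) * A τ - (3 / 2) * wpd τ (2 * p τ)
        - ∑ k : Fin 4, n k * (n k + 1) * wpd τ (p τ + halfp τ k / 2))) τ

/-- the generalized Lamé potential `I(z;τ)`. -/
def Ipot (n : Fin 4 → ℂ) (zeta : ℂ → ℂ → ℂ) (A B p τ z : ℂ) : ℂ :=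
  (∑ k : Fin 4, n k * (n k + 1) * wp τ (z + halfp τ k / 2))
    + (3 / 4) * (wp τ (z + p) + wp τ (z - p))
    + A * (zeta τ (z + p) - zeta τ (z - p)) + B

end

/-!
Both sides of the heat equation `2πi ∂℘/∂τ = (ζ - zη₁)℘' + 2(℘ - η₁)℘ - g₂/3` are holomorphic in `z`
off `Λ_τ`. Their difference is elliptic: under `z ↦ z + m + nτ` the left side, differentiated term
by term, gains `-2πi n ℘'`, and by Legendre's relation so does the right side. At the origin the
poles and constant terms cancel, so the difference extends to a bounded entire function vanishing
at `0`.
-/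

/-! ### Removable singularities -/

section

variable {E : Type*} [NormedAddCommGroup E] [NormedSpace ℂ E] [CompleteSpace E]

lemma sub_isLittleO_pow_succ_of_analyticAt {f : ℂ → E} {x : ℂ} {n : ℕ} (hf : AnalyticAt ℂ f x)
    (hf' : deriv f =o[𝓝[≠] x] fun z ↦ (z - x) ^ n) :
    (fun z ↦ f z - f x) =o[𝓝 x] fun z ↦ (z - x) ^ (n + 1) := by
  have hderiv₀ : deriv f x = 0 := by
    have hpow : (fun z : ℂ ↦ (z - x) ^ n) =O[𝓝[≠] x] fun _ ↦ (1 : ℂ) :=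
      ((Continuous.tendsto (by fun_prop) x).mono_left nhdsWithin_le_nhds).isBigO_one ℂ
    exact tendsto_nhds_unique (hf.deriv.continuousAt.tendsto.mono_left nhdsWithin_le_nhds)
      ((isLittleO_one_iff ℂ).mp (hf'.trans_isBigO hpow))
  obtain ⟨r, hr, hball⟩ := Metric.eventually_nhds_iff_ball.mp hf.eventually_analyticAt
  have hnhds : 𝓝[Metric.ball x r] x = 𝓝 x := Metric.isOpen_ball.nhdsWithin_eq (by simpa)
  have hf'₀ : deriv f =o[𝓝 x] fun z ↦ (z - x) ^ n := by
    simpa [Set.insert_eq, Set.union_compl_self] using hf'.insert hderiv₀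
  have hfderiv : (fun z ↦ (fderiv ℂ f z).restrictScalars ℝ) =o[𝓝 x] fun z ↦ ‖z - x‖ ^ n := by
    refine isLittleO_norm_left.mp ?_
    simpa [← norm_deriv_eq_norm_fderiv] using hf'₀.norm_norm
  have key := (convex_ball x r).isLittleO_pow_succ (Metric.mem_ball_self hr)
    (fun z hz ↦ ((hball z hz).differentiableAt.hasFDerivAt.restrictScalars ℝ).hasFDerivWithinAt)
    (hnhds ▸ hfderiv)
  simpa [hnhds, ← norm_pow] using key

lemma tendsto_div_pow_succ_of_hasDerivAt {f f' : ℂ → ℂ} {x c : ℂ} {n : ℕ}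
    (hf₀ : Tendsto f (𝓝[≠] x) (𝓝 0)) (hf : ∀ᶠ z in 𝓝[≠] x, HasDerivAt f (f' z) z)
    (hf' : Tendsto (fun z ↦ f' z / (z - x) ^ n) (𝓝[≠] x) (𝓝 c)) :
    Tendsto (fun z ↦ f z / (z - x) ^ (n + 1)) (𝓝[≠] x) (𝓝 (c / (n + 1))) := by
  let g : ℂ → ℂ := fun z ↦ Function.update f x 0 z - c / (n + 1) * (z - x) ^ (n + 1)
  have hn : (n + 1 : ℂ) ≠ 0 := n.cast_add_one_ne_zero
  have hg' : ∀ᶠ z in 𝓝[≠] x, HasDerivAt g (f' z - c * (z - x) ^ n) z := by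
    filter_upwards [hf, self_mem_nhdsWithin] with z hz hzx
    refine .congr_deriv ((hz.congr_of_eventuallyEq ?_).sub
      ((((hasDerivAt_id z).sub_const x).pow (n + 1)).const_mul (c / (n + 1)))) ?_
    · filter_upwards [isOpen_ne.mem_nhds hzx] with w hw using Function.update_of_ne hw ..
    · push_cast
      field_simp
      simp
  have hg : AnalyticAt ℂ g x :=
    analyticAt_of_differentiable_on_punctured_nhds_of_continuousAt
      (hg'.mono fun z hz ↦ hz.differentiableAt)
      ((continuousAt_update_same.mpr hf₀).sub (by fun_prop))
  have hpow {z : ℂ} (hzx : z ≠ x) : (z - x) ^ n ≠ 0 := pow_ne_zero n (sub_ne_zero.mpr hzx)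
  have ho : deriv g =o[𝓝[≠] x] fun z ↦ (z - x) ^ n := by
    refine (isLittleO_iff_tendsto' ?_).mpr (Tendsto.congr' ?_ (sub_self c ▸ hf'.sub_const c))
    · filter_upwards [self_mem_nhdsWithin] with z hzx h using absurd h (hpow hzx)
    · filter_upwards [hg', self_mem_nhdsWithin] with z hz hzx
      rw [hz.deriv, sub_div, mul_div_cancel_right₀ _ (hpow hzx)]
  have key := (sub_isLittleO_pow_succ_of_analyticAt hg ho).tendsto_div_nhds_zero
  refine Tendsto.congr' ?_ (zero_add (c / (n + 1)) ▸
    (key.mono_left nhdsWithin_le_nhds).add_const (c / (n + 1)))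
  filter_upwards [self_mem_nhdsWithin] with z (hzx : z ≠ x)
  have hzx₀ : z - x ≠ 0 := sub_ne_zero.mpr hzx
  simp only [g, Function.update_of_ne hzx, Function.update_self, sub_self, ne_eq, n.succ_ne_zero,
    not_false_eq_true, zero_pow, mul_zero, sub_zero]
  rw [sub_div, mul_div_cancel_right₀ _ (pow_ne_zero _ hzx₀), sub_add_cancel]

lemma differentiable_of_tendsto_nhdsNE {f g : ℂ → E}
    (hf : ∀ x, ∀ᶠ z in 𝓝[≠] x, DifferentiableAt ℂ f z)
    (hg : ∀ z, Tendsto f (𝓝[≠] z) (𝓝 (g z))) : Differentiable ℂ g := by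
  intro x
  have heq : ∀ᶠ z in 𝓝[≠] x, f z = g z := (hf x).mono fun z hz ↦
    tendsto_nhds_unique (hz.continuousAt.tendsto.mono_left nhdsWithin_le_nhds) (hg z)
  refine (analyticAt_of_differentiable_on_punctured_nhds_of_continuousAt ?_ ?_).differentiableAt
  · filter_upwards [hf x, eventually_eventually_nhdsWithin.mpr heq, self_mem_nhdsWithin]
      with z hz hz' hzx
    refine hz.congr_of_eventuallyEq ?_
    filter_upwards [(isOpen_ne.nhdsWithin_eq hzx) ▸ hz'] with w hw using hw.symm
  · exact continuousAt_iff_punctured_nhds.mpr ((hg x).congr' heq)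

lemma tendsto_nhdsNE_add {G X : Type*} [AddGroup G] [TopologicalSpace G] [ContinuousAdd G]
    [TopologicalSpace X] {f : G → X} {x l : G} {c : X} (hper : ∀ᶠ z in 𝓝[≠] x, f (z + l) = f z)
    (hf : Tendsto f (𝓝[≠] x) (𝓝 c)) : Tendsto f (𝓝[≠] (x + l)) (𝓝 c) := by
  rw [← map_add_right_nhdsNE, tendsto_map'_iff]
  exact hf.congr' (hper.mono fun _ hz ↦ hz.symm)

lemma exists_eq_of_periodic_of_tendsto_nhdsNE (L : PeriodPair) {f : ℂ → E}
    (hper : ∀ l ∈ L.lattice, ∀ x, ∀ᶠ z in 𝓝[≠] x, f (z + l) = f z)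
    (hf : ∀ x, ∀ᶠ z in 𝓝[≠] x, DifferentiableAt ℂ f z)
    (hlim : ∀ x, ∃ c, Tendsto f (𝓝[≠] x) (𝓝 c)) :
    ∃ c, ∀ z, ContinuousAt f z → f z = c := by
  choose g hg using hlim
  have hgd : Differentiable ℂ g := differentiable_of_tendsto_nhdsNE hf hg
  have hgper : ∀ z, ∀ l ∈ L.lattice, g (z + l) = g z := fun z l hl ↦
    tendsto_nhds_unique (hg (z + l)) (tendsto_nhdsNE_add (hper l hl z) (hg z))
  have hgb := (IsZLattice.isCompact_range_of_periodic L.lattice g hgd.continuous hgper).isBounded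
  exact ⟨g 0, fun z hz ↦ (tendsto_nhds_unique (hz.tendsto.mono_left nhdsWithin_le_nhds)
    (hg z)).trans (hgd.apply_eq_apply_of_bounded hgb z 0)⟩

end

open scoped PeriodPair

/-! ### Half-periods of `℘` -/

section

variable (L : PeriodPair)

lemma isPreconnected_compl_lattice : IsPreconnected (L.lattice : Set ℂ)ᶜ := by
  have hcount : (L.lattice : Set ℂ).Countable :=
    L.latticeEquivProd.toEquiv.countable_iff.mpr inferInstance
  exact (hcount.isPathConnected_compl_of_one_lt_rank
    (by simp [Complex.rank_real_complex])).isConnected.isPreconnected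

lemma eventually_nhdsNE_notMem_lattice (x : ℂ) : ∀ᶠ z in 𝓝[≠] x, z ∉ L.lattice := by
  filter_upwards [nhdsWithin_le_nhds (L.compl_lattice_sdiff_singleton_mem_nhds x),
    self_mem_nhdsWithin] with z hz hzx hzL using hz ⟨hzL, hzx⟩

lemma tendsto_weierstrassP_cobounded : Tendsto ℘[L] (𝓝[≠] 0) (Bornology.cobounded ℂ) := by
  apply tendsto_cobounded_of_meromorphicOrderAt_neg
  rw [L.order_weierstrassP 0 (zero_mem _)]
  exact WithTop.coe_lt_coe.mpr (by norm_num : (-2 : ℤ) < 0)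

lemma eventually_weierstrassP_ne (c : ℂ) : ∀ᶠ z in 𝓝[≠] 0, ℘[L] z ≠ c :=
  (tendsto_weierstrassP_cobounded L).eventually
    (Bornology.isBounded_def.mp Bornology.isBounded_singleton)

lemma weierstrassP_eq_inv_sq_add (z : ℂ) : ℘[L] z = z⁻¹ ^ 2 + ℘[L - (0 : ℂ)] z := by
  simpa [add_comm] using (L.weierstrassPExcept_add 0 z).symm

variable {L} {h : ℂ}

lemma weierstrassP_add_of_mem {l : ℂ} (hl : l ∈ L.lattice) (z : ℂ) : ℘[L] (z + l) = ℘[L] z :=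
  L.weierstrassP_add_coe z ⟨l, hl⟩

lemma derivWeierstrassP_add_of_mem {l : ℂ} (hl : l ∈ L.lattice) (z : ℂ) :
    ℘'[L] (z + l) = ℘'[L] z :=
  L.derivWeierstrassP_add_coe z ⟨l, hl⟩

lemma hasDerivAt_weierstrassP {z : ℂ} (hz : z ∉ L.lattice) : HasDerivAt ℘[L] (℘'[L] z) z := by
  simpa using (L.analyticOnNhd_weierstrassP z hz).differentiableAt.hasDerivAt

lemma derivWeierstrassP_eq_zero_of_add_self_mem (hh₂ : h + h ∈ L.lattice) : ℘'[L] h = 0 := by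
  have := derivWeierstrassP_add_of_mem hh₂ (-h)
  rw [neg_add_cancel_left, L.derivWeierstrassP_neg] at this
  exact CharZero.eq_neg_self_iff.mp this

lemma exists_tendsto_weierstrassP_sub_mul_nhdsNE_zero (hh : h ∉ L.lattice)
    (hh₂ : h + h ∈ L.lattice) :
    ∃ c, Tendsto (fun z ↦ (℘[L] (z + h) - ℘[L] h) * (℘[L] z - ℘[L] h)) (𝓝[≠] 0) (𝓝 c) := by
  have hderiv (z) (hz : z + h ∉ L.lattice) :
      HasDerivAt (fun w ↦ ℘[L] (w + h) - ℘[L] h) (℘'[L] (z + h)) z :=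
    ((hasDerivAt_weierstrassP hz).comp_add_const z h).sub_const _
  have hz₀ : ∀ᶠ z : ℂ in 𝓝 0, z + h ∉ L.lattice :=
    ((continuous_add_const h).continuousAt (x := 0)).eventually_mem
      (L.isClosed_lattice.isOpen_compl.mem_nhds (by simpa))
  have hdd : HasDerivAt (fun z ↦ ℘'[L] (z + h)) (deriv ℘'[L] h) 0 := by
    refine HasDerivAt.comp_add_const 0 h ?_
    simpa using (L.analyticOnNhd_derivWeierstrassP h hh).differentiableAt.hasDerivAt
  have hlim := tendsto_div_pow_succ_of_hasDerivAt (x := 0) (n := 1) (c := deriv ℘'[L] h)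
    (by simpa using ((hderiv 0 (by simpa)).continuousAt.tendsto.mono_left nhdsWithin_le_nhds))
    ((hz₀.filter_mono nhdsWithin_le_nhds).mono hderiv)
    (by simpa [slope_fun_def, derivWeierstrassP_eq_zero_of_add_self_mem hh₂, div_eq_inv_mul]
      using hdd.tendsto_slope)
  have hreg : Tendsto (fun z ↦ 1 + z ^ 2 * (℘[L - (0 : ℂ)] z - ℘[L] h)) (𝓝[≠] 0) (𝓝 1) := by
    have := (L.analyticAt_weierstrassPExcept 0).continuousAt
    have : ContinuousAt (fun z ↦ 1 + z ^ 2 * (℘[L - (0 : ℂ)] z - ℘[L] h)) 0 := by fun_prop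
    simpa using this.tendsto.mono_left nhdsWithin_le_nhds
  refine ⟨_, (hlim.mul hreg).congr' ?_⟩
  filter_upwards [self_mem_nhdsWithin] with z (hz : z ≠ 0)
  rw [sub_zero, weierstrassP_eq_inv_sq_add L z]
  field_simp
  ring

/-- The double zero of each factor cancels the double pole of the other. -/
lemma exists_weierstrassP_sub_mul_eq (hh : h ∉ L.lattice) (hh₂ : h + h ∈ L.lattice) :
    ∃ c, ∀ z ∉ L.lattice, z + h ∉ L.lattice →
      (℘[L] (z + h) - ℘[L] h) * (℘[L] z - ℘[L] h) = c := by
  let f : ℂ → ℂ := fun z ↦ (℘[L] (z + h) - ℘[L] h) * (℘[L] z - ℘[L] h)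
  have hper (l) (hl : l ∈ L.lattice) (z) : f (z + l) = f z := by
    simp only [f, add_right_comm z l h, weierstrassP_add_of_mem hl]
  have hperh (z) : f (z + h) = f z := by
    simp only [f, add_assoc z h h, weierstrassP_add_of_mem hh₂, mul_comm]
  have hd (z) (hz : z ∉ L.lattice) (hzh : z + h ∉ L.lattice) : DifferentiableAt ℂ f z := by
    have h₁ := (hasDerivAt_weierstrassP hz).differentiableAt
    have h₂ := ((hasDerivAt_weierstrassP hzh).comp_add_const z h).differentiableAt
    fun_prop
  obtain ⟨c₀, hc₀⟩ := exists_tendsto_weierstrassP_sub_mul_nhdsNE_zero hh hh₂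
  have hlat (x) (hx : x ∈ L.lattice) : Tendsto f (𝓝[≠] x) (𝓝 c₀) := by
    simpa using tendsto_nhdsNE_add (.of_forall (hper x hx)) hc₀
  have hlim (x) : ∃ c, Tendsto f (𝓝[≠] x) (𝓝 c) := by
    by_cases hx : x ∈ L.lattice
    · exact ⟨c₀, hlat x hx⟩
    by_cases hxh : x + h ∈ L.lattice
    · refine ⟨c₀, ?_⟩
      have := hlat (x + h + -(h + h)) (add_mem hxh (neg_mem hh₂))
      simpa [add_assoc] using tendsto_nhdsNE_add (.of_forall hperh) this
    · exact ⟨f x, (hd x hx hxh).continuousAt.tendsto.mono_left nhdsWithin_le_nhds⟩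
  have hd' (x) : ∀ᶠ z in 𝓝[≠] x, DifferentiableAt ℂ f z := by
    have hadd : Tendsto (· + h) (𝓝[≠] x) (𝓝[≠] (x + h)) := map_add_right_nhdsNE.le
    filter_upwards [eventually_nhdsNE_notMem_lattice L x,
      hadd.eventually (eventually_nhdsNE_notMem_lattice L (x + h))]
      with z hz hzh using hd z hz hzh
  obtain ⟨c, hc⟩ := exists_eq_of_periodic_of_tendsto_nhdsNE L
    (fun l hl x ↦ .of_forall (hper l hl)) hd' hlim
  exact ⟨c, fun z hz hzh ↦ hc z (hd z hz hzh).continuousAt⟩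

lemma weierstrassP_ne_of_add_self_mem {z : ℂ} (hh : h ∉ L.lattice) (hh₂ : h + h ∈ L.lattice)
    (hz : z ∉ L.lattice) (hzh : z + h ∉ L.lattice) : ℘[L] z ≠ ℘[L] h := by
  intro heq
  obtain ⟨c, hc⟩ := exists_weierstrassP_sub_mul_eq hh hh₂
  have hc₀ : c = 0 := by simpa [heq] using (hc z hz hzh).symm
  have hadd : Tendsto (· + h) (𝓝[≠] 0) (𝓝[≠] h) :=
    (map_add_right_nhdsNE.trans (by rw [zero_add])).le
  have hnear : ∀ᶠ w in 𝓝[≠] 0, ℘[L] (w + h) = ℘[L] h := by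
    filter_upwards [eventually_nhdsNE_notMem_lattice L 0, eventually_weierstrassP_ne L (℘[L] h),
      hadd.eventually (eventually_nhdsNE_notMem_lattice L h)] with w hw hwne hwh
    exact sub_eq_zero.mp ((mul_eq_zero.mp ((hc w hw hwh).trans hc₀)).resolve_right
      (sub_ne_zero.mpr hwne))
  have hconst := L.analyticOnNhd_weierstrassP.eqOn_of_preconnected_of_frequently_eq
    (analyticOnNhd_const (v := ℘[L] h)) (isPreconnected_compl_lattice L) hh
    (hadd.frequently hnear.frequently)
  obtain ⟨w, hw, hwne⟩ := ((eventually_nhdsNE_notMem_lattice L 0).and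
    (eventually_weierstrassP_ne L (℘[L] h))).exists
  exact hwne (hconst hw)

lemma weierstrassP_cubic_of_add_self_mem (hh : h ∉ L.lattice) (hh₂ : h + h ∈ L.lattice) :
    4 * ℘[L] h ^ 3 - L.g₂ * ℘[L] h - L.g₃ = 0 := by
  simp [← L.derivWeierstrassP_sq h hh, derivWeierstrassP_eq_zero_of_add_self_mem hh₂]

lemma g₂_eq_of_add_self_mem {a b : ℂ} (ha : a ∉ L.lattice) (hb : b ∉ L.lattice)
    (hab : a + b ∉ L.lattice) (ha₂ : a + a ∈ L.lattice) (hb₂ : b + b ∈ L.lattice) :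
    L.g₂ = -4 * (℘[L] a * ℘[L] b + ℘[L] a * ℘[L] (a + b) + ℘[L] b * ℘[L] (a + b)) := by
  have hab₂ : (a + b) + (a + b) ∈ L.lattice := by
    simpa [add_add_add_comm] using add_mem ha₂ hb₂
  have hane : ℘[L] (a + b) ≠ ℘[L] a := by
    refine weierstrassP_ne_of_add_self_mem ha ha₂ hab fun h ↦ hb ?_
    rw [add_right_comm] at h
    exact (add_mem_cancel_left ha₂).mp h
  have hbne : ℘[L] (a + b) ≠ ℘[L] b := by
    refine weierstrassP_ne_of_add_self_mem hb hb₂ hab fun h ↦ ha ?_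
    rw [add_assoc] at h
    exact (add_mem_cancel_right hb₂).mp h
  have hne : ℘[L] a ≠ ℘[L] b := weierstrassP_ne_of_add_self_mem hb hb₂ ha hab
  have hca := weierstrassP_cubic_of_add_self_mem ha ha₂
  have hcb := weierstrassP_cubic_of_add_self_mem hb hb₂
  have hcab := weierstrassP_cubic_of_add_self_mem hab hab₂
  generalize ℘[L] a = x at *
  generalize ℘[L] b = y at *
  generalize ℘[L] (a + b) = w at *
  have hxy : 4 * (x ^ 2 + x * y + y ^ 2) = L.g₂ :=
    mul_left_cancel₀ (sub_ne_zero.mpr hne) (by linear_combination hca - hcb)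
  have hxw : 4 * (w ^ 2 + w * x + x ^ 2) = L.g₂ :=
    mul_left_cancel₀ (sub_ne_zero.mpr hane) (by linear_combination hcab - hca)
  have hsum : x + y + w = 0 :=
    mul_left_cancel₀ (sub_ne_zero.mpr hbne) (by linear_combination (hxw - hxy) / 4)
  linear_combination -hxy + 4 * (x + y) * hsum

end

/-! ### Zeta functions -/

/-- A Weierstrass zeta function of `L`: a primitive of `-℘[L]` off the lattice, normalised by
`ζ(z) - 1/z → 0` at the origin. Its values on the lattice are unconstrained. -/
structure IsZetaFunction (L : PeriodPair) (ζ : ℂ → ℂ) : Prop where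
  hasDerivAt : ∀ z ∉ L.lattice, HasDerivAt ζ (-℘[L] z) z
  tendsto : Tendsto (fun z ↦ ζ z - z⁻¹) (𝓝[≠] 0) (𝓝 0)

section

variable {L : PeriodPair} {ζ : ℂ → ℂ}

lemma tendsto_derivWeierstrassPExcept_div :
    Tendsto (fun z ↦ ℘'[L - (0 : ℂ)] z / z) (𝓝[≠] 0) (𝓝 (6 * L.G 4)) := by
  have h := (L.analyticAt_derivWeierstrassPExcept 0).differentiableAt.hasDerivAt.tendsto_slope
  simpa [slope_fun_def, L.sumInvPow_zero, div_eq_inv_mul] using h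

lemma tendsto_weierstrassPExcept_div_sq :
    Tendsto (fun z ↦ ℘[L - (0 : ℂ)] z / z ^ 2) (𝓝[≠] 0) (𝓝 (3 * L.G 4)) := by
  have hz : Tendsto ℘[L - (0 : ℂ)] (𝓝[≠] 0) (𝓝 0) := by
    simpa using (L.analyticAt_weierstrassPExcept 0).continuousAt.tendsto.mono_left
      nhdsWithin_le_nhds
  have hderiv : ∀ᶠ z in 𝓝[≠] 0, HasDerivAt ℘[L - (0 : ℂ)] (℘'[L - (0 : ℂ)] z) z := by
    filter_upwards [nhdsWithin_le_nhds (L.compl_lattice_sdiff_singleton_mem_nhds 0)] with z hz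
    rw [← L.eqOn_deriv_weierstrassPExcept_derivWeierstrassPExcept 0 hz]
    exact (L.analyticOnNhd_weierstrassPExcept 0 z hz).differentiableAt.hasDerivAt
  convert tendsto_div_pow_succ_of_hasDerivAt (n := 1) hz hderiv
    (by simpa using tendsto_derivWeierstrassPExcept_div) using 2 with z
  · rw [sub_zero]
  · push_cast
    ring

namespace IsZetaFunction

lemma tendsto_mul (h : IsZetaFunction L ζ) : Tendsto (fun z ↦ z * ζ z) (𝓝[≠] 0) (𝓝 1) := by
  have hz : Tendsto (fun z : ℂ ↦ z) (𝓝[≠] 0) (𝓝 0) := tendsto_id.mono_left nhdsWithin_le_nhds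
  refine Tendsto.congr' ?_ (by simpa using (hz.mul h.tendsto).add_const 1)
  filter_upwards [self_mem_nhdsWithin] with z (hz₀ : z ≠ 0)
  rw [mul_sub, mul_inv_cancel₀ hz₀, sub_add_cancel]

lemma tendsto_sub_inv_div_pow_three (h : IsZetaFunction L ζ) :
    Tendsto (fun z ↦ (ζ z - z⁻¹) / z ^ 3) (𝓝[≠] 0) (𝓝 (-L.G 4)) := by
  have hderiv : ∀ᶠ z in 𝓝[≠] 0, HasDerivAt (fun z ↦ ζ z - z⁻¹) (-℘[L - (0 : ℂ)] z) z := by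
    filter_upwards [eventually_nhdsNE_notMem_lattice L 0, self_mem_nhdsWithin] with z hz hz₀
    refine ((h.hasDerivAt z hz).sub (hasDerivAt_inv hz₀)).congr_deriv ?_
    rw [weierstrassP_eq_inv_sq_add]
    ring
  convert tendsto_div_pow_succ_of_hasDerivAt (n := 2) h.tendsto hderiv
    (by simpa only [neg_div, sub_zero] using tendsto_weierstrassPExcept_div_sq.neg) using 2 with z
  · rw [sub_zero]
  · push_cast
    ring

lemma tendsto_heatOperator (h : IsZetaFunction L ζ) (η : ℂ) :
    Tendsto (fun z ↦ (ζ z - z * η) * ℘'[L] z + 2 * (℘[L] z - η) * ℘[L] z - L.g₂ / 3)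
      (𝓝[≠] 0) (𝓝 0) := by
  have hz : Tendsto (fun z : ℂ ↦ z) (𝓝[≠] 0) (𝓝 0) := tendsto_id.mono_left nhdsWithin_le_nhds
  have hP := tendsto_weierstrassPExcept_div_sq (L := L)
  have hP' := tendsto_derivWeierstrassPExcept_div (L := L)
  have hζ := h.tendsto_sub_inv_div_pow_three
  have key := ((((((hP'.sub (hζ.const_mul 2)).add (hP.const_mul 4)).add
    ((h.tendsto.mul hz).mul hP')).sub (((hz.pow 2).mul_const η).mul hP')).add
    ((((hz.pow 2).mul hP).pow 2).const_mul 2)).sub (((hz.pow 2).mul hP).const_mul (2 * η))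
    ).sub_const (L.g₂ / 3)
  convert key.congr' ?_ using 2
  · rw [PeriodPair.g₂]
    ring
  filter_upwards [self_mem_nhdsWithin] with z (hz₀ : z ≠ 0)
  have hd : ℘'[L] z = ℘'[L - (0 : ℂ)] z - 2 / z ^ 3 := by
    simpa using (L.derivWeierstrassPExcept_sub 0 z).symm
  rw [weierstrassP_eq_inv_sq_add, hd]
  field_simp
  ring

lemma exists_add_eq (h : IsZetaFunction L ζ) (l : L.lattice) :
    ∃ η, ∀ z ∉ L.lattice, ζ (z + l) = ζ z + η := by
  have hadd (z) (hz : z ∉ L.lattice) : z + l ∉ L.lattice :=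
    fun h ↦ hz ((add_mem_cancel_right l.2).mp h)
  have hderiv (z) (hz : z ∉ L.lattice) : HasDerivAt (fun z ↦ ζ (z + l) - ζ z) 0 z := by
    refine (((h.hasDerivAt _ (hadd z hz)).comp_add_const z l).sub
      (h.hasDerivAt z hz)).congr_deriv ?_
    rw [L.weierstrassP_add_coe, sub_self]
  obtain ⟨η, hη⟩ := L.isClosed_lattice.isOpen_compl.exists_is_const_of_deriv_eq_zero
    (isPreconnected_compl_lattice L)
    (fun z hz ↦ (hderiv z hz).differentiableAt.differentiableWithinAt)
    (fun z hz ↦ (hderiv z hz).deriv)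
  exact ⟨η, fun z hz ↦ by rw [← hη z hz, add_sub_cancel]⟩

lemma exists_quasiPeriod (h : IsZetaFunction L ζ) :
    ∃ H : L.lattice →+ ℂ, ∀ z ∉ L.lattice, ∀ l : L.lattice, ζ (z + l) = ζ z + H l := by
  choose H hH using h.exists_add_eq
  obtain ⟨z, hz⟩ := (eventually_nhdsNE_notMem_lattice L 0).exists
  refine ⟨.mk' H fun l m ↦ add_left_cancel (a := ζ z) ?_, fun z hz l ↦ hH l z hz⟩
  have hzl : z + l ∉ L.lattice := fun h ↦ hz ((add_mem_cancel_right l.2).mp h)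
  rw [← hH _ z hz, Submodule.coe_add, ← add_assoc, hH m _ hzl, hH l z hz, add_assoc]

end IsZetaFunction

end

/-! ### The lattice `ℤ + τℤ` -/

/-- The period pair `(1, τ)`, whose lattice is `Λ_τ`. -/
noncomputable def tauPair (τ : ℂ) (hτ : 0 < τ.im) : PeriodPair where
  ω₁ := 1
  ω₂ := τ
  indep := LinearIndependent.pair_iff.mpr fun s t h ↦ by
    have ht : t = 0 := by simpa [hτ.ne'] using congrArg im h
    exact ⟨by simpa [ht] using h, ht⟩

/-- The lattice point `m + nτ` with coordinates `(m, n)`. -/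
def latticePt (τ : ℂ) (w : ℤ × ℤ) : ℂ := w.1 + w.2 * τ

/-- The summand of `℘(z|τ)` attached to a lattice point. For `w = 0` it is `z⁻²`, because
`0⁻¹ = 0`, so that the sum over all of `ℤ × ℤ` is `℘(z|τ)`. -/
noncomputable def wpTerm (τ z : ℂ) (w : ℤ × ℤ) : ℂ :=
  (z - latticePt τ w)⁻¹ ^ 2 - (latticePt τ w)⁻¹ ^ 2

section

variable {τ z : ℂ}

lemma inLattice_iff_exists_latticePt : InLattice τ z ↔ ∃ w, z = latticePt τ w := by
  simp [InLattice, latticePt]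

variable (hτ : 0 < τ.im)

lemma mem_tauPair_lattice : z ∈ (tauPair τ hτ).lattice ↔ InLattice τ z := by
  simp [PeriodPair.mem_lattice, InLattice, tauPair, eq_comm]

lemma coe_latticeEquivProd_symm_tauPair (w : ℤ × ℤ) :
    ((tauPair τ hτ).latticeEquivProd.symm w : ℂ) = latticePt τ w := by
  simpa [tauPair, latticePt] using (tauPair τ hτ).latticeEquiv_symm_apply w

lemma hasSum_wpTerm (z : ℂ) : HasSum (wpTerm τ z) (℘[tauPair τ hτ] z) := by
  rw [← (tauPair τ hτ).latticeEquivProd.toEquiv.hasSum_iff]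
  convert (tauPair τ hτ).hasSum_weierstrassP z using 2 with l
  obtain ⟨w, rfl⟩ := (tauPair τ hτ).latticeEquivProd.symm.surjective l
  simp [wpTerm, coe_latticeEquivProd_symm_tauPair]

lemma hasSum_neg_two_mul_inv_cube (z : ℂ) :
    HasSum (fun w ↦ -2 * (z - latticePt τ w)⁻¹ ^ 3) (℘'[tauPair τ hτ] z) := by
  rw [← (tauPair τ hτ).latticeEquivProd.toEquiv.hasSum_iff]
  convert (tauPair τ hτ).hasSum_derivWeierstrassP z using 2 with l
  obtain ⟨w, rfl⟩ := (tauPair τ hτ).latticeEquivProd.symm.surjective l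
  simp [coe_latticeEquivProd_symm_tauPair, div_eq_mul_inv]

lemma wp_eq_weierstrassP : wp τ = ℘[tauPair τ hτ] := by
  ext z
  have hsum := (hasSum_wpTerm hτ z).summable
  rw [wp, ← (hasSum_wpTerm hτ z).tsum_eq, ← hsum.tsum_subtype_add_tsum_subtype_compl {0}]
  rw [tsum_singleton 0 (wpTerm τ z)]
  simp only [wpTerm, latticePt, Prod.fst_zero, Prod.snd_zero, Int.cast_zero, zero_mul, add_zero,
    sub_zero, inv_zero, ne_eq, OfNat.ofNat_ne_zero, not_false_eq_true, zero_pow]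
  rfl

lemma wpd_eq_derivWeierstrassP : wpd τ = ℘'[tauPair τ hτ] := by
  ext z
  rw [wpd, wp_eq_weierstrassP hτ, PeriodPair.deriv_weierstrassP]

lemma g2_eq_g₂ : g2 τ = (tauPair τ hτ).g₂ := by
  have hsum : 1 / 2 + τ / 2 ∉ (tauPair τ hτ).lattice := by
    have := (tauPair τ hτ).mul_ω₁_add_mul_ω₂_mem_lattice (α := 1 / 2) (β := 1 / 2)
    simpa [tauPair, div_eq_inv_mul, this] using this
  rw [g₂_eq_of_add_self_mem (tauPair τ hτ).ω₁_div_two_notMem_lattice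
    (tauPair τ hτ).ω₂_div_two_notMem_lattice hsum (by simpa using (tauPair τ hτ).ω₁_mem_lattice)
    (by simpa using (tauPair τ hτ).ω₂_mem_lattice), g2, e1, e2, e3, wp_eq_weierstrassP hτ, add_div]
  rfl

end

/-! ### Residues by horizontal integrals -/

lemma intervalIntegrable_comp_ofReal_add {f : ℂ → ℂ} {c : ℂ} {a b : ℝ}
    (hf : ∀ x : ℝ, x ∈ Set.uIcc a b → ContinuousAt f (x + c)) :
    IntervalIntegrable (fun x : ℝ ↦ f (x + c)) MeasureTheory.volume a b :=
  ContinuousOn.intervalIntegrable fun x hx ↦ (ContinuousAt.comp (f := fun x : ℝ ↦ (x + c : ℂ))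
    (hf x hx) (by fun_prop)).continuousWithinAt

lemma mem_integerComplement_of_abs_re_lt_one {z : ℂ} (hz : z ≠ 0) (hre : |z.re| < 1) :
    z ∈ integerComplement := by
  rintro ⟨k, rfl⟩
  have hk : |(k : ℝ)| < 1 := by simpa using hre
  obtain rfl : k = 0 := Int.abs_lt_one_iff.mp (by exact_mod_cast hk)
  simp at hz

lemma differentiableAt_pi_mul_cot {z : ℂ} (hz : z ∈ integerComplement) :
    DifferentiableAt ℂ (fun z ↦ Real.pi * cot (Real.pi * z)) z := by
  simp only [cot]
  fun_prop (disch := exact sin_pi_mul_ne_zero hz)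

lemma tendsto_mul_pi_mul_cot :
    Tendsto (fun z : ℂ ↦ z * (Real.pi * cot (Real.pi * z))) (𝓝[≠] 0) (𝓝 1) := by
  have hsin : Tendsto (fun z : ℂ ↦ sin (Real.pi * z) / z) (𝓝[≠] 0) (𝓝 Real.pi) := by
    have h : HasDerivAt (fun z : ℂ ↦ sin (Real.pi * z)) Real.pi 0 := by
      simpa using ((hasDerivAt_id (0 : ℂ)).const_mul (Real.pi : ℂ)).csin
    simpa [slope_fun_def, div_eq_inv_mul] using h.tendsto_slope
  have hcos : Tendsto (fun z : ℂ ↦ Real.pi * cos (Real.pi * z)) (𝓝[≠] 0) (𝓝 Real.pi) := by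
    have : Continuous fun z : ℂ ↦ Real.pi * cos (Real.pi * z) := by fun_prop
    simpa using (this.tendsto 0).mono_left nhdsWithin_le_nhds
  have hpi : (Real.pi : ℂ) ≠ 0 := ofReal_ne_zero.mpr Real.pi_ne_zero
  convert hcos.div hsin hpi using 2 with z
  · simp only [cot, Pi.div_apply]
    rw [div_div_eq_mul_div]
    ring
  · rw [div_self hpi]

lemma hasDerivAt_log_one_sub_exp {z : ℂ} (hz : 0 < z.im) :
    HasDerivAt (fun z ↦ log (1 - exp (2 * Real.pi * I * z)) - Real.pi * I * z)
      (Real.pi * cot (Real.pi * z)) z := by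
  have hq : ‖exp (2 * Real.pi * I * z)‖ < 1 :=
    UpperHalfPlane.norm_exp_two_pi_I_lt_one ⟨z, hz⟩
  have hslit : 1 - exp (2 * Real.pi * I * z) ∈ slitPlane := by
    rw [sub_eq_add_neg]
    exact mem_slitPlane_of_norm_lt_one (by simpa)
  have hlin (c : ℂ) : HasDerivAt (fun z ↦ c * z) c z := by
    simpa using (hasDerivAt_id z).const_mul c
  refine (((hlin (2 * Real.pi * I)).cexp.const_sub 1).clog hslit |>.sub
    (hlin (Real.pi * I))).congr_deriv ?_
  rw [cot_pi_eq_exp_ratio]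
  have := slitPlane_ne_zero hslit
  field_simp
  rw [I_sq]
  ring

lemma integral_pi_mul_cot {y : ℝ} (hy : 0 < y) :
    ∫ x in (-(1 / 2) : ℝ)..1 / 2, Real.pi * cot (Real.pi * (x + y * I)) = -(Real.pi * I) := by
  have hderiv (x : ℝ) := (hasDerivAt_log_one_sub_exp (z := x + y * I) (by simpa)).comp_add_const
    (x : ℂ) (y * I) |>.comp_ofReal
  rw [intervalIntegral.integral_eq_sub_of_hasDerivAt (fun x _ ↦ hderiv x)
    (intervalIntegrable_comp_ofReal_add fun x _ ↦
      (differentiableAt_pi_mul_cot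
        (UpperHalfPlane.coe_mem_integerComplement ⟨x + y * I, by simpa⟩)).continuousAt)]
  have hexp : exp (2 * Real.pi * I * ((1 / 2 : ℝ) + y * I)) =
      exp (2 * Real.pi * I * ((-(1 / 2) : ℝ) + y * I)) := by
    rw [← exp_periodic (2 * Real.pi * I * ((-(1 / 2) : ℝ) + y * I))]
    congr 1
    push_cast
    ring
  rw [hexp]
  push_cast
  ring

lemma integral_horizontal_eq_of_tendsto_mul_zero {f : ℂ → ℂ} {ε : ℝ} (hε : 0 < ε)
    (hper : ∀ y : ℝ, |y| ≤ ε → f (1 / 2 + y * I) = f (-(1 / 2) + y * I))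
    (hf : ∀ z ≠ 0, |z.re| ≤ 1 / 2 → |z.im| ≤ ε → DifferentiableAt ℂ f z)
    (h₀ : Tendsto (fun z ↦ z * f z) (𝓝[≠] 0) (𝓝 0)) :
    ∫ x in (-(1 / 2) : ℝ)..1 / 2, f (x + ε * I) = ∫ x in (-(1 / 2) : ℝ)..1 / 2, f (x - ε * I) := by
  set g := Function.update f 0 (limUnder (𝓝[≠] 0) f)
  set R : Set ℂ := Set.Icc (-(1 / 2)) (1 / 2) ×ℂ Set.Icc (-ε) ε with hR
  have hR₀ : R ∈ 𝓝 0 := inter_mem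
    (continuous_re.continuousAt.preimage_mem_nhds (Icc_mem_nhds (by simp) (by simp)))
    (continuous_im.continuousAt.preimage_mem_nhds (Icc_mem_nhds (by simpa) (by simpa)))
  have hg : DifferentiableOn ℂ g R := by
    refine differentiableOn_update_limUnder_of_isLittleO hR₀ (fun z ⟨⟨hre, him⟩, hz⟩ ↦
      (hf z hz (abs_le.mpr hre) (abs_le.mpr him)).differentiableWithinAt) ?_
    rw [isLittleO_iff_tendsto'
      (by filter_upwards [self_mem_nhdsWithin] with z (hz : z ≠ 0) h₀ using by simp [hz] at h₀)]
    have hz : Tendsto (fun z : ℂ ↦ z * f 0) (𝓝[≠] 0) (𝓝 0) := by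
      simpa using (tendsto_id.mul_const (f 0)).mono_left (nhdsWithin_le_nhds (a := (0 : ℂ)))
    simpa [mul_sub, mul_comm] using h₀.sub hz
  have hgf {z : ℂ} (hz : z.re ≠ 0 ∨ z.im ≠ 0) : g z = f z :=
    Function.update_of_ne (by rintro rfl; simp at hz) _ _
  have key := integral_boundary_rect_eq_zero_of_differentiableOn g (-(1 / 2) - ε * I)
    (1 / 2 + ε * I) (by simpa [Set.uIcc_of_le, hε.le, hR] using hg)
  have hside : ∫ y in -ε..ε, g (1 / 2 + y * I) = ∫ y in -ε..ε, g (-(1 / 2) + y * I) :=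
    intervalIntegral.integral_congr fun y hy ↦ by
      rw [Set.uIcc_of_le (by linarith)] at hy
      rw [hgf (by simp), hgf (by simp), hper y (abs_le.mpr hy)]
  have htop (x : ℝ) : g (x + ε * I) = f (x + ε * I) := hgf (by simp [hε.ne'])
  have hbot (x : ℝ) : g (x - ε * I) = f (x - ε * I) := hgf (by simp [hε.ne'])
  symm
  simpa [-one_div, ← sub_eq_add_neg, hside, htop, hbot, sub_eq_zero] using key

lemma pi_mul_cot_add_half (y : ℝ) :
    Real.pi * cot (Real.pi * (1 / 2 + y * I)) = Real.pi * cot (Real.pi * (-(1 / 2) + y * I)) := by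
  have h : (Real.pi : ℂ) * (1 / 2 + y * I) = Real.pi * (-(1 / 2) + y * I) + Real.pi := by ring
  rw [h, cot, cot, sin_add_pi, cos_add_pi, neg_div_neg_eq]

lemma integral_pi_mul_cot_sub {y : ℝ} (hy : 0 < y) :
    ∫ x in (-(1 / 2) : ℝ)..1 / 2, Real.pi * cot (Real.pi * (x - y * I)) = Real.pi * I := by
  have h := intervalIntegral.integral_comp_neg (a := -(1 / 2)) (b := 1 / 2)
    fun x : ℝ ↦ Real.pi * cot (Real.pi * (x - y * I))
  have hodd (x : ℝ) : Real.pi * cot (Real.pi * ((-x : ℝ) - y * I)) =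
      -(Real.pi * cot (Real.pi * (x + y * I))) := by
    have h : (Real.pi : ℂ) * ((-x : ℝ) - y * I) = -(Real.pi * (x + y * I)) := by
      push_cast
      ring
    rw [h, cot, cot, sin_neg, cos_neg, div_neg, mul_neg]
  simp only [hodd, intervalIntegral.integral_neg, integral_pi_mul_cot hy, neg_neg] at h
  exact h.symm

/-- Subtracting the multiple `r π cot(πz)` of the `1`-periodic function with simple poles of
residue `1` at the integers removes the pole of `f`. -/
lemma integral_horizontal_sub_of_tendsto_mul {f : ℂ → ℂ} {ε : ℝ} {r : ℂ} (hε : 0 < ε)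
    (hper : ∀ y : ℝ, |y| ≤ ε → f (1 / 2 + y * I) = f (-(1 / 2) + y * I))
    (hf : ∀ z ≠ 0, |z.re| ≤ 1 / 2 → |z.im| ≤ ε → DifferentiableAt ℂ f z)
    (hr : Tendsto (fun z ↦ z * f z) (𝓝[≠] 0) (𝓝 r)) :
    (∫ x in (-(1 / 2) : ℝ)..1 / 2, f (x + ε * I)) - ∫ x in (-(1 / 2) : ℝ)..1 / 2, f (x - ε * I) =
      -(2 * Real.pi * I * r) := by
  set c : ℂ → ℂ := fun z ↦ Real.pi * cot (Real.pi * z) with hc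
  have hcd (z : ℂ) (hz : z ≠ 0) (hre : |z.re| ≤ 1 / 2) : DifferentiableAt ℂ c z :=
    differentiableAt_pi_mul_cot (mem_integerComplement_of_abs_re_lt_one hz (by linarith))
  have hint {g : ℂ → ℂ} (hg : ∀ z ≠ 0, |z.re| ≤ 1 / 2 → |z.im| ≤ ε → DifferentiableAt ℂ g z)
      {y : ℝ} (hy : |y| = ε) :
      IntervalIntegrable (fun x : ℝ ↦ g (x + y * I)) MeasureTheory.volume (-(1 / 2)) (1 / 2) := by
    refine intervalIntegrable_comp_ofReal_add fun x hx ↦ (hg _ (fun h ↦ ?_) ?_ ?_).continuousAt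
    · exact abs_ne_zero.mp (hy ▸ hε.ne') (by simpa using congrArg im h)
    · rw [Set.uIcc_of_le (by norm_num)] at hx
      simpa using abs_le.mpr hx
    · simpa using hy.le
  have hline {y : ℝ} (hy : |y| = ε) :
      ∫ x in (-(1 / 2) : ℝ)..1 / 2, (f (x + y * I) - r * c (x + y * I)) =
        (∫ x in (-(1 / 2) : ℝ)..1 / 2, f (x + y * I)) -
          r * ∫ x in (-(1 / 2) : ℝ)..1 / 2, c (x + y * I) := by
    rw [intervalIntegral.integral_sub (hint hf hy)
      ((hint (fun z hz hre _ ↦ hcd z hz hre) hy).const_mul r),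
      intervalIntegral.integral_const_mul]
  have htop := hline (abs_of_pos hε)
  have hbot := hline (y := -ε) (by rw [abs_neg, abs_of_pos hε])
  simp only [ofReal_neg, neg_mul, ← sub_eq_add_neg] at hbot
  have key := integral_horizontal_eq_of_tendsto_mul_zero (f := fun z ↦ f z - r * c z) hε
    (fun y hy ↦ by simp only [hper y hy, hc, pi_mul_cot_add_half])
    (fun z hz hre him ↦ (hf z hz hre him).sub ((hcd z hz hre).const_mul r))
    (by simpa [mul_sub, mul_left_comm, hc] using hr.sub (tendsto_mul_pi_mul_cot.const_mul r))
  rw [htop, hbot, integral_pi_mul_cot hε, integral_pi_mul_cot_sub hε] at key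
  linear_combination key

/-! ### Legendre's relation -/

section

variable {τ z : ℂ} (hτ : 0 < τ.im)

lemma notMem_tauPair_lattice_of_im (h₀ : z.im ≠ 0) (him : |z.im| < τ.im) :
    z ∉ (tauPair τ hτ).lattice := by
  intro hz
  obtain ⟨m, n, rfl⟩ := (mem_tauPair_lattice hτ).mp hz
  have hn : |(n : ℝ)| < 1 := by simpa [abs_mul, abs_of_pos hτ, hτ] using him
  obtain rfl : n = 0 := Int.abs_lt_one_iff.mp (by exact_mod_cast hn)
  simp at h₀

lemma eq_zero_of_mem_tauPair_lattice (hz : z ∈ (tauPair τ hτ).lattice) (hre : |z.re| < 1)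
    (him : |z.im| < τ.im) : z = 0 := by
  have h₀ : z.im = 0 := by
    by_contra h
    exact notMem_tauPair_lattice_of_im hτ h him hz
  obtain ⟨m, n, rfl⟩ := (mem_tauPair_lattice hτ).mp hz
  obtain rfl : n = 0 := by simpa [hτ.ne'] using h₀
  have hm : |(m : ℝ)| < 1 := by simpa using hre
  obtain rfl : m = 0 := Int.abs_lt_one_iff.mp (by exact_mod_cast hm)
  simp

lemma integral_add_tau_sub_integral {φ : ℂ → ℂ} {κ : ℂ}
    (hφ : ∀ z ∉ (tauPair τ hτ).lattice, ContinuousAt φ z)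
    (h₁ : ∀ z ∉ (tauPair τ hτ).lattice, φ (z + 1) = φ z)
    (h₂ : ∀ z ∉ (tauPair τ hτ).lattice, φ (z + τ) = φ z + κ) :
    (∫ x in (-(1 / 2) : ℝ)..1 / 2, φ (x + (τ.im / 2 : ℝ) * I)) -
      ∫ x in (-(1 / 2) : ℝ)..1 / 2, φ (x - (τ.im / 2 : ℝ) * I) = κ := by
  set ε := τ.im / 2 with hε
  have hlow (x : ℝ) : (x - ε * I : ℂ) ∉ (tauPair τ hτ).lattice :=
    notMem_tauPair_lattice_of_im hτ (by simp [hε, hτ.ne'])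
      (by simpa [hε, abs_of_pos (half_pos hτ)] using hτ)
  have hshift (x : ℝ) : φ (x + ε * I) = φ ((x - τ.re : ℝ) - ε * I) + κ := by
    rw [← h₂ _ (hlow _)]
    congr 1
    apply Complex.ext <;> simp [hε]
    ring
  have hper : Function.Periodic (fun x : ℝ ↦ φ (x - ε * I)) 1 := fun x ↦ by
    dsimp only
    rw [← h₁ _ (hlow x), ofReal_add, ofReal_one, add_sub_right_comm]
  have hint (a b : ℝ) :
      IntervalIntegrable (fun x : ℝ ↦ φ (x - ε * I)) MeasureTheory.volume a b := by
    simpa only [sub_eq_add_neg] using intervalIntegrable_comp_ofReal_add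
      fun x _ ↦ hφ _ (sub_eq_add_neg (x : ℂ) (ε * I) ▸ hlow x)
  have hmove : ∫ x in (-(1 / 2) : ℝ)..1 / 2, φ ((x - τ.re : ℝ) - ε * I) =
      ∫ x in (-(1 / 2) : ℝ)..1 / 2, φ (x - ε * I) := by
    rw [intervalIntegral.integral_comp_sub_right (fun x : ℝ ↦ φ (x - ε * I))]
    convert hper.intervalIntegral_add_eq (-(1 / 2) - τ.re) (-(1 / 2)) using 2 <;> ring
  simp only [hshift]
  rw [intervalIntegral.integral_add _ intervalIntegrable_const, hmove]
  · norm_num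
  · simpa using (hint (-(1 / 2) - τ.re) (1 / 2 - τ.re)).comp_sub_right τ.re

/-- Legendre's relation: compare the residue `1` of `ζ(z) - zη₁` at the origin with its integral
over the boundary of a period parallelogram. -/
lemma IsZetaFunction.legendre {ζ : ℂ → ℂ} {η₁ η₂ : ℂ} (h : IsZetaFunction (tauPair τ hτ) ζ)
    (h₁ : ∀ z ∉ (tauPair τ hτ).lattice, ζ (z + 1) = ζ z + η₁)
    (h₂ : ∀ z ∉ (tauPair τ hτ).lattice, ζ (z + τ) = ζ z + η₂) :
    τ * η₁ - η₂ = 2 * Real.pi * I := by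
  set φ : ℂ → ℂ := fun z ↦ ζ z - z * η₁ with hφ
  have hφd (z : ℂ) (hz : z ∉ (tauPair τ hτ).lattice) : DifferentiableAt ℂ φ z :=
    (h.hasDerivAt z hz).differentiableAt.sub (by fun_prop)
  have hφ₁ (z : ℂ) (hz : z ∉ (tauPair τ hτ).lattice) : φ (z + 1) = φ z := by
    simp only [hφ, h₁ z hz]
    ring
  have hφ₂ (z : ℂ) (hz : z ∉ (tauPair τ hτ).lattice) : φ (z + τ) = φ z + (η₂ - τ * η₁) := by
    simp only [hφ, h₂ z hz]
    ring
  have hres : Tendsto (fun z ↦ z * φ z) (𝓝[≠] 0) (𝓝 1) := by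
    have hz : Tendsto (fun z : ℂ ↦ z) (𝓝[≠] 0) (𝓝 0) := tendsto_id.mono_left nhdsWithin_le_nhds
    simpa [hφ, mul_sub, pow_two, mul_assoc] using h.tendsto_mul.sub ((hz.pow 2).mul_const η₁)
  have hmem (z : ℂ) (hz : z ≠ 0) (hre : |z.re| ≤ 1 / 2) (him : |z.im| ≤ τ.im / 2) :
      z ∉ (tauPair τ hτ).lattice :=
    fun hzL ↦ hz (eq_zero_of_mem_tauPair_lattice hτ hzL (by linarith) (by linarith))
  have hside (y : ℝ) (hy : |y| ≤ τ.im / 2) : φ (1 / 2 + y * I) = φ (-(1 / 2) + y * I) := by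
    have h : (1 / 2 + y * I : ℂ) = -(1 / 2) + y * I + 1 := by ring
    rw [h, hφ₁ _ (hmem _ (fun h ↦ ?_) (by norm_num) (by simpa))]
    simpa using congrArg re h
  have := integral_horizontal_sub_of_tendsto_mul (half_pos hτ) hside
    (fun z hz hre him ↦ hφd z (hmem z hz hre him)) hres
  rw [integral_add_tau_sub_integral hτ (fun z hz ↦ (hφd z hz).continuousAt) hφ₁ hφ₂] at this
  linear_combination -this

end

/-! ### The `τ`-derivative of `℘` -/

/-- The `τ`-derivative of `wpTerm`. -/
noncomputable def wpTermTau (τ z : ℂ) (w : ℤ × ℤ) : ℂ :=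
  2 * w.2 * ((z - latticePt τ w)⁻¹ ^ 3 + (latticePt τ w)⁻¹ ^ 3)

/-- The series of `τ`-derivatives of the summands of `℘(z|τ)`. -/
noncomputable def wpTau (τ z : ℂ) : ℂ := ∑' w, wpTermTau τ z w

section

variable {τ z : ℂ}

lemma wpTermTau_zero_right : wpTermTau τ z 0 = 0 := by simp [wpTermTau]

lemma wpTau_zero_right : wpTau τ 0 = 0 := by
  refine (tsum_congr fun w ↦ ?_).trans tsum_zero
  rw [wpTermTau, zero_sub, inv_neg]
  ring

lemma abs_snd_mul_im_le_norm_latticePt (hτ : 0 < τ.im) (w : ℤ × ℤ) :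
    |(w.2 : ℝ)| * τ.im ≤ ‖latticePt τ w‖ := by
  simpa [latticePt, abs_mul, abs_of_pos hτ] using abs_im_le_norm (latticePt τ w)

lemma norm_latticePt_sub_mul_im_le (hτ : 0 < τ.im) (t : ℂ) (w : ℤ × ℤ) :
    ‖latticePt t w - latticePt τ w‖ * τ.im ≤ ‖t - τ‖ * ‖latticePt τ w‖ := by
  have h : latticePt t w - latticePt τ w = (t - τ) * w.2 := by
    simp only [latticePt]
    ring
  rw [h, norm_mul, norm_intCast, mul_assoc]
  gcongr
  exact abs_snd_mul_im_le_norm_latticePt hτ w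

lemma latticePt_add (v w : ℤ × ℤ) : latticePt τ (v + w) = latticePt τ v + latticePt τ w := by
  simp only [latticePt, Prod.fst_add, Prod.snd_add, Int.cast_add]
  ring

lemma latticePt_neg (w : ℤ × ℤ) : latticePt τ (-w) = -latticePt τ w := by
  simp only [latticePt, Prod.fst_neg, Prod.snd_neg, Int.cast_neg]
  ring

lemma latticePt_ne_zero (hτ : 0 < τ.im) {w : ℤ × ℤ} (hw : w ≠ 0) : latticePt τ w ≠ 0 := by
  rw [← coe_latticeEquivProd_symm_tauPair hτ]
  simpa using hw

lemma summable_norm_latticePt_inv_pow_three (hτ : 0 < τ.im) :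
    Summable fun w ↦ ‖latticePt τ w‖⁻¹ ^ 3 := by
  have h := ZLattice.summable_norm_pow_inv (tauPair τ hτ).lattice 3 (by simp)
  rw [← (tauPair τ hτ).latticeEquivProd.symm.toEquiv.summable_iff] at h
  simpa [Function.comp_def, coe_latticeEquivProd_symm_tauPair] using h

lemma exists_eventually_mul_norm_latticePt_le (hτ : 0 < τ.im)
    (hz : z ∉ ((tauPair τ hτ).lattice : Set ℂ) \ {0}) :
    ∃ c > 0, ∀ᶠ p in 𝓝 (τ, z), ∀ w ≠ 0, c * ‖latticePt τ w‖ ≤ ‖latticePt p.1 w‖ ∧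
      c * ‖latticePt τ w‖ ≤ ‖p.2 - latticePt p.1 w‖ := by
  obtain ⟨d, hd, hball⟩ := Metric.mem_nhds_iff.mp
    (((tauPair τ hτ).isClosed_of_subset_lattice Set.sdiff_subset).isOpen_compl.mem_nhds hz)
  have hdist (w : ℤ × ℤ) (hw : w ≠ 0) : d ≤ ‖z - latticePt τ w‖ := by
    by_contra! h
    refine hball (a := latticePt τ w) (by rwa [Metric.mem_ball, dist_comm, dist_eq_norm])
      ⟨?_, latticePt_ne_zero hτ hw⟩
    exact (mem_tauPair_lattice hτ).mpr ⟨w.1, w.2, rfl⟩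
  set δ := d / (‖z‖ + d) with hδ
  have hδ₀ : 0 < δ := by positivity
  have hδ₁ : δ ≤ 1 := div_le_one_of_le₀ (by linarith [norm_nonneg z]) (by positivity)
  have hfar (w : ℤ × ℤ) (hw : w ≠ 0) : δ * ‖latticePt τ w‖ ≤ ‖z - latticePt τ w‖ := by
    rw [hδ, div_mul_eq_mul_div, div_le_iff₀ (by positivity)]
    have : ‖latticePt τ w‖ ≤ ‖z‖ + ‖z - latticePt τ w‖ := by
      simpa using norm_sub_le z (z - latticePt τ w)
    nlinarith [hdist w hw, norm_nonneg z]
  refine ⟨δ / 4, div_pos hδ₀ four_pos, ?_⟩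
  have hnear : Metric.ball τ (δ / 4 * τ.im) ×ˢ Metric.ball z (d / 2) ∈ 𝓝 (τ, z) :=
    prod_mem_nhds (Metric.ball_mem_nhds _ (by positivity)) (Metric.ball_mem_nhds _ (by positivity))
  filter_upwards [hnear] with ⟨t, x⟩ ⟨ht, hx⟩ w hw
  rw [mem_ball_iff_norm] at ht hx
  have hpert : ‖latticePt t w - latticePt τ w‖ ≤ δ / 4 * ‖latticePt τ w‖ := by
    refine le_of_mul_le_mul_right ((norm_latticePt_sub_mul_im_le hτ t w).trans ?_) hτ
    nlinarith [mul_le_mul_of_nonneg_right ht.le (norm_nonneg (latticePt τ w))]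
  constructor
  · have := norm_sub_norm_le (latticePt τ w) (latticePt t w)
    rw [norm_sub_rev] at this
    nlinarith [norm_nonneg (latticePt τ w)]
  · have h : z - latticePt τ w =
        (x - latticePt t w) - (x - z) + (latticePt t w - latticePt τ w) := by ring
    have := h ▸ norm_add_le (x - latticePt t w - (x - z)) (latticePt t w - latticePt τ w)
    have := norm_sub_le (x - latticePt t w) (x - z)
    have := hdist w hw
    have := hfar w hw
    linarith

lemma eventually_ne_latticePt (hτ : 0 < τ.im) (hz : z ∉ ((tauPair τ hτ).lattice : Set ℂ) \ {0}) :
    ∀ᶠ p in 𝓝 (τ, z), ∀ w ≠ 0, latticePt p.1 w ≠ 0 ∧ p.2 - latticePt p.1 w ≠ 0 := by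
  obtain ⟨c, hc, h⟩ := exists_eventually_mul_norm_latticePt_le hτ hz
  filter_upwards [h] with p hp w hw
  have := mul_pos hc (norm_pos_iff.mpr (latticePt_ne_zero hτ hw))
  exact ⟨norm_pos_iff.mp (this.trans_le (hp w hw).1), norm_pos_iff.mp (this.trans_le (hp w hw).2)⟩

lemma norm_inv_cube_add_inv_cube_le {l : ℂ} {r : ℝ} (hr : 0 < r) (hl : r ≤ ‖l‖)
    (hzl : r ≤ ‖z - l‖) : ‖(z - l)⁻¹ ^ 3 + l⁻¹ ^ 3‖ ≤ 3 * ‖z‖ * r⁻¹ ^ 4 := by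
  have hl₀ : l ≠ 0 := norm_pos_iff.mp (hr.trans_le hl)
  have hzl₀ : z - l ≠ 0 := norm_pos_iff.mp (hr.trans_le hzl)
  have ha : ‖(z - l)⁻¹‖ ≤ r⁻¹ := by rw [norm_inv]; gcongr
  have hb : ‖l⁻¹‖ ≤ r⁻¹ := by rw [norm_inv]; gcongr
  have h : (z - l)⁻¹ ^ 3 + l⁻¹ ^ 3 =
      z * (z - l)⁻¹ * l⁻¹ * ((z - l)⁻¹ ^ 2 - (z - l)⁻¹ * l⁻¹ + l⁻¹ ^ 2) := by
    field_simp
    ring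
  calc ‖(z - l)⁻¹ ^ 3 + l⁻¹ ^ 3‖
      ≤ ‖z‖ * ‖(z - l)⁻¹‖ * ‖l⁻¹‖ * (‖(z - l)⁻¹‖ ^ 2 + ‖(z - l)⁻¹‖ * ‖l⁻¹‖ + ‖l⁻¹‖ ^ 2) := by
        rw [h, norm_mul, norm_mul, norm_mul]
        gcongr
        refine (norm_add_le _ _).trans (add_le_add ((norm_sub_le _ _).trans ?_) ?_) <;> simp
    _ ≤ ‖z‖ * r⁻¹ * r⁻¹ * (r⁻¹ ^ 2 + r⁻¹ * r⁻¹ + r⁻¹ ^ 2) := by gcongr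
    _ = 3 * ‖z‖ * r⁻¹ ^ 4 := by ring

lemma exists_summable_norm_wpTermTau_le (hτ : 0 < τ.im)
    (hz : z ∉ ((tauPair τ hτ).lattice : Set ℂ) \ {0}) :
    ∃ u : ℤ × ℤ → ℝ, Summable u ∧ ∀ᶠ p in 𝓝 (τ, z), ∀ w, ‖wpTermTau p.1 p.2 w‖ ≤ u w := by
  obtain ⟨c, hc, hev⟩ := exists_eventually_mul_norm_latticePt_le hτ hz
  refine ⟨_, (summable_norm_latticePt_inv_pow_three hτ).mul_left
    (6 * (‖z‖ + 1) * c⁻¹ ^ 4 * τ.im⁻¹), ?_⟩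
  have hbdd : ∀ᶠ p : ℂ × ℂ in 𝓝 (τ, z), ‖p.2‖ < ‖z‖ + 1 :=
    continuousAt_snd.norm.tendsto.eventually_lt_const (lt_add_one _)
  filter_upwards [hev, hbdd] with p hp hpz w
  rcases eq_or_ne w 0 with rfl | hw
  · rw [wpTermTau_zero_right, norm_zero]
    positivity
  have hl := norm_pos_iff.mpr (latticePt_ne_zero hτ hw)
  have hn : ‖(2 * w.2 : ℂ)‖ ≤ 2 * (‖latticePt τ w‖ * τ.im⁻¹) := by
    rw [norm_mul, norm_intCast, norm_ofNat, ← div_eq_mul_inv]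
    gcongr
    exact (le_div_iff₀ hτ).mpr (abs_snd_mul_im_le_norm_latticePt hτ w)
  calc ‖wpTermTau p.1 p.2 w‖
      ≤ 2 * (‖latticePt τ w‖ * τ.im⁻¹) * (3 * (‖z‖ + 1) * (c * ‖latticePt τ w‖)⁻¹ ^ 4) := by
        rw [wpTermTau, norm_mul]
        gcongr
        refine (norm_inv_cube_add_inv_cube_le (by positivity) (hp w hw).1 (hp w hw).2).trans ?_
        gcongr
    _ = _ := by
        field_simp
        ring

lemma hasDerivAt_wpTerm {w : ℤ × ℤ} (h : w ≠ 0 → latticePt τ w ≠ 0 ∧ z - latticePt τ w ≠ 0) :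
    HasDerivAt (fun t ↦ wpTerm t z w) (wpTermTau τ z w) τ := by
  rcases eq_or_ne w 0 with rfl | hw
  · simpa [wpTerm, latticePt, wpTermTau_zero_right] using hasDerivAt_const τ (z ^ 2)⁻¹
  obtain ⟨hl, hzl⟩ := h hw
  have hpt : HasDerivAt (fun t ↦ latticePt t w) w.2 τ := by
    simpa [latticePt] using ((hasDerivAt_id τ).const_mul (w.2 : ℂ)).const_add (w.1 : ℂ)
  refine ((((hpt.const_sub z).inv hzl).pow 2).sub ((hpt.inv hl).pow 2)).congr_deriv ?_
  simp only [wpTermTau, Pi.inv_apply, Nat.add_one_sub_one, pow_one, Nat.cast_ofNat]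
  field_simp
  ring

lemma hasDerivAt_wp (hτ : 0 < τ.im) (hz : z ∉ (tauPair τ hτ).lattice) :
    HasDerivAt (fun t ↦ wp t z) (wpTau τ z) τ := by
  have hz' : z ∉ ((tauPair τ hτ).lattice : Set ℂ) \ {0} := fun h ↦ hz h.1
  obtain ⟨u, hu, hle⟩ := exists_summable_norm_wpTermTau_le hτ hz'
  have hpair : Tendsto (fun t ↦ (t, z)) (𝓝 τ) (𝓝 (τ, z)) :=
    (Continuous.prodMk_left z).tendsto τ
  obtain ⟨ρ, hρ, hball⟩ := Metric.eventually_nhds_iff_ball.mp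
    ((hpair.eventually hle).and (hpair.eventually (eventually_ne_latticePt hτ hz')))
  have hmem := Metric.mem_ball_self (x := τ) hρ
  have key := hasDerivAt_tsum_of_isPreconnected hu Metric.isOpen_ball
    (convex_ball τ ρ).isPreconnected
    (fun w t ht ↦ hasDerivAt_wpTerm ((hball t ht).2 w)) (fun w t ht ↦ (hball t ht).1 w) hmem
    (hasSum_wpTerm hτ z).summable hmem
  refine key.congr_of_eventuallyEq ?_
  filter_upwards [continuous_im.continuousAt.eventually_const_lt hτ] with t ht
  rw [wp_eq_weierstrassP ht, (hasSum_wpTerm ht z).tsum_eq]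

lemma differentiableAt_wpTau (hτ : 0 < τ.im) (hz : z ∉ ((tauPair τ hτ).lattice : Set ℂ) \ {0}) :
    DifferentiableAt ℂ (wpTau τ) z := by
  obtain ⟨u, hu, hle⟩ := exists_summable_norm_wpTermTau_le hτ hz
  have hpair : Tendsto (fun x ↦ (τ, x)) (𝓝 z) (𝓝 (τ, z)) :=
    (Continuous.prodMk_right τ).tendsto z
  obtain ⟨ρ, hρ, hball⟩ := Metric.eventually_nhds_iff_ball.mp
    ((hpair.eventually hle).and (hpair.eventually (eventually_ne_latticePt hτ hz)))
  refine (differentiableOn_tsum_of_summable_norm hu (fun w x hx ↦ ?_) Metric.isOpen_ball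
    (fun w x hx ↦ (hball x hx).1 w)).differentiableAt (Metric.ball_mem_nhds z hρ)
  rcases eq_or_ne w 0 with rfl | hw
  · simp only [wpTermTau_zero_right]
    fun_prop
  · have hne : x - latticePt τ w ≠ 0 := ((hball x hx).2 w hw).2
    refine DifferentiableAt.differentiableWithinAt ?_
    simp only [wpTermTau]
    fun_prop (disch := assumption)

lemma tendsto_wpTau_nhdsNE_zero (hτ : 0 < τ.im) : Tendsto (wpTau τ) (𝓝[≠] 0) (𝓝 0) := by
  have := (differentiableAt_wpTau (z := 0) hτ (by simp)).continuousAt.tendsto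
  rw [wpTau_zero_right] at this
  exact this.mono_left nhdsWithin_le_nhds

lemma hasSum_wpTermTau (hτ : 0 < τ.im) (hz : z ∉ (tauPair τ hτ).lattice) :
    HasSum (wpTermTau τ z) (wpTau τ z) := by
  obtain ⟨u, hu, hle⟩ := exists_summable_norm_wpTermTau_le hτ (z := z) fun h ↦ hz h.1
  exact (hu.of_norm_bounded hle.self_of_nhds).hasSum

/-- Reindexing by `w ↦ w + v` leaves a sum independent of `z`, whose terms are exchanged up to sign
by `w ↦ -v - w`. -/
lemma wpTau_add_latticePt (hτ : 0 < τ.im) (hz : z ∉ (tauPair τ hτ).lattice) (v : ℤ × ℤ) :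
    wpTau τ (z + latticePt τ v) = wpTau τ z - v.2 * ℘'[tauPair τ hτ] z := by
  have hv : latticePt τ v ∈ (tauPair τ hτ).lattice :=
    (mem_tauPair_lattice hτ).mpr ⟨v.1, v.2, rfl⟩
  set s : ℤ × ℤ → ℂ := fun w ↦ 2 * (w.2 * (latticePt τ w)⁻¹ ^ 3) with hs
  have hs_neg (w : ℤ × ℤ) : s (-w) = s w := by
    simp only [hs, latticePt_neg, Prod.snd_neg, Int.cast_neg, inv_neg]
    ring
  have hshift := (Equiv.addRight v).hasSum_iff.mpr
    (hasSum_wpTermTau hτ (z := z + latticePt τ v) (by rwa [Submodule.add_mem_iff_left _ hv]))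
  have hsum : HasSum (fun w ↦ s (w + v) - s w)
      (wpTau τ (z + latticePt τ v) - wpTau τ z + v.2 * ℘'[tauPair τ hτ] z) := by
    refine ((hshift.sub (hasSum_wpTermTau hτ hz)).add
      ((hasSum_neg_two_mul_inv_cube hτ z).mul_left (v.2 : ℂ))).congr_fun fun w ↦ ?_
    simp only [Function.comp_apply, Equiv.coe_addRight, wpTermTau, latticePt_add,
      add_sub_add_right_eq_sub, Prod.snd_add, Int.cast_add, hs]
    ring
  have hodd : HasSum (fun w ↦ -(s (w + v) - s w))
      (wpTau τ (z + latticePt τ v) - wpTau τ z + v.2 * ℘'[tauPair τ hτ] z) := by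
    refine ((Equiv.subLeft (-v)).hasSum_iff.mpr hsum).congr_fun fun w ↦ ?_
    rw [Function.comp_apply, Equiv.subLeft_apply, sub_add_eq_add_sub, neg_add_cancel, zero_sub,
      ← neg_add', hs_neg, hs_neg, add_comm v w, neg_sub]
  have := CharZero.eq_neg_self_iff.mp (hodd.unique hsum.neg)
  linear_combination this

end

/-! ### The heat equation -/

/-- The defect of the heat equation `2πi ∂℘/∂τ = (ζ - zη)℘' + 2(℘ - η)℘ - g₂/3`. -/
noncomputable def heatDefect {τ : ℂ} (hτ : 0 < τ.im) (ζ : ℂ → ℂ) (η z : ℂ) : ℂ :=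
  2 * Real.pi * I * wpTau τ z - ((ζ z - z * η) * ℘'[tauPair τ hτ] z +
    2 * (℘[tauPair τ hτ] z - η) * ℘[tauPair τ hτ] z - (tauPair τ hτ).g₂ / 3)

section

variable {τ z η : ℂ} {ζ : ℂ → ℂ} {hτ : 0 < τ.im}

lemma IsZetaFunction.add_latticePt (h : IsZetaFunction (tauPair τ hτ) ζ)
    (hη : ∀ z ∉ (tauPair τ hτ).lattice, ζ (z + 1) = ζ z + η) (hz : z ∉ (tauPair τ hτ).lattice)
    (v : ℤ × ℤ) :
    ζ (z + latticePt τ v) = ζ z + (v.1 * η + v.2 * (τ * η - 2 * Real.pi * I)) := by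
  obtain ⟨H, hH⟩ := h.exists_quasiPeriod
  let ω₁ : (tauPair τ hτ).lattice := ⟨1, (tauPair τ hτ).ω₁_mem_lattice⟩
  let ω₂ : (tauPair τ hτ).lattice := ⟨τ, (tauPair τ hτ).ω₂_mem_lattice⟩
  have hH₁ : H ω₁ = η := add_left_cancel ((hH z hz ω₁).symm.trans (hη z hz))
  have hH₂ : τ * η - H ω₂ = 2 * Real.pi * I := h.legendre hτ hη fun z hz ↦ hH z hz ω₂
  have hv : latticePt τ v = (v.1 • ω₁ + v.2 • ω₂ : (tauPair τ hτ).lattice) := by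
    simp [latticePt, ω₁, ω₂]
  rw [hv, hH z hz, map_add, map_zsmul, map_zsmul, hH₁, zsmul_eq_mul, zsmul_eq_mul]
  linear_combination -v.2 * hH₂

lemma heatDefect_add (h : IsZetaFunction (tauPair τ hτ) ζ)
    (hη : ∀ z ∉ (tauPair τ hτ).lattice, ζ (z + 1) = ζ z + η) (hz : z ∉ (tauPair τ hτ).lattice)
    {l : ℂ} (hl : l ∈ (tauPair τ hτ).lattice) :
    heatDefect hτ ζ η (z + l) = heatDefect hτ ζ η z := by
  have hP := weierstrassP_add_of_mem hl z
  have hP' := derivWeierstrassP_add_of_mem hl z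
  obtain ⟨v, rfl⟩ := inLattice_iff_exists_latticePt.mp ((mem_tauPair_lattice hτ).mp hl)
  rw [heatDefect, heatDefect, hP, hP', wpTau_add_latticePt hτ hz, h.add_latticePt hη hz, latticePt]
  ring

lemma differentiableAt_heatDefect (h : IsZetaFunction (tauPair τ hτ) ζ)
    (hz : z ∉ (tauPair τ hτ).lattice) : DifferentiableAt ℂ (heatDefect hτ ζ η) z := by
  have hL := (tauPair τ hτ).isClosed_lattice.isOpen_compl.mem_nhds hz
  have hT := differentiableAt_wpTau hτ fun h ↦ hz h.1
  have hζ := (h.hasDerivAt z hz).differentiableAt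
  have hP := (tauPair τ hτ).differentiableOn_weierstrassP.differentiableAt hL
  have hP' := (tauPair τ hτ).differentiableOn_derivWeierstrassP.differentiableAt hL
  unfold heatDefect
  fun_prop

lemma tendsto_heatDefect_nhdsNE_zero (h : IsZetaFunction (tauPair τ hτ) ζ) :
    Tendsto (heatDefect hτ ζ η) (𝓝[≠] 0) (𝓝 0) := by
  have := ((tendsto_wpTau_nhdsNE_zero hτ).const_mul (2 * Real.pi * I)).sub
    (h.tendsto_heatOperator η)
  rwa [mul_zero, sub_zero] at this

lemma heatDefect_eq_zero (h : IsZetaFunction (tauPair τ hτ) ζ)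
    (hη : ∀ z ∉ (tauPair τ hτ).lattice, ζ (z + 1) = ζ z + η) (hz : z ∉ (tauPair τ hτ).lattice) :
    heatDefect hτ ζ η z = 0 := by
  have hmem := eventually_nhdsNE_notMem_lattice (tauPair τ hτ)
  have hdiff {z} (hz : z ∉ (tauPair τ hτ).lattice) : DifferentiableAt ℂ (heatDefect hτ ζ η) z :=
    differentiableAt_heatDefect h hz
  have hper (l) (hl : l ∈ (tauPair τ hτ).lattice) (x) : ∀ᶠ z in 𝓝[≠] x,
      heatDefect hτ ζ η (z + l) = heatDefect hτ ζ η z :=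
    (hmem x).mono fun z hz ↦ heatDefect_add h hη hz hl
  have h₀ := tendsto_heatDefect_nhdsNE_zero (η := η) h
  obtain ⟨c, hc⟩ := exists_eq_of_periodic_of_tendsto_nhdsNE (tauPair τ hτ) hper
    (fun x ↦ (hmem x).mono fun z hz ↦ hdiff hz) fun x ↦ by
      by_cases hx : x ∈ (tauPair τ hτ).lattice
      · exact ⟨0, by simpa using tendsto_nhdsNE_add (hper x hx 0) h₀⟩
      · exact ⟨_, (hdiff hx).continuousAt.tendsto.mono_left nhdsWithin_le_nhds⟩
  have hconst : heatDefect hτ ζ η =ᶠ[𝓝[≠] 0] fun _ ↦ c :=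
    (hmem 0).mono fun z hz ↦ hc z (hdiff hz).continuousAt
  rw [hc z (hdiff hz).continuousAt]
  exact tendsto_nhds_unique tendsto_const_nhds (h₀.congr' hconst)

end

lemma IsWeierstrassZeta.isZetaFunction {zeta : ℂ → ℂ → ℂ} {τ : ℂ} (hzeta : IsWeierstrassZeta zeta)
    (hτ : 0 < τ.im) : IsZetaFunction (tauPair τ hτ) (zeta τ) := by
  obtain ⟨-, hderiv, hlim⟩ := hzeta τ hτ
  exact ⟨fun z hz ↦ wp_eq_weierstrassP hτ ▸ hderiv z (mt (mem_tauPair_lattice hτ).mpr hz),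
    hlim⟩

/-- Lemma 2.3 (iii): the `τ`-derivative of `℘(z|τ)`. -/
theorem tau_deriv_wp
    (zeta : ℂ → ℂ → ℂ) (eta1 : ℂ → ℂ)
    (hzeta : IsWeierstrassZeta zeta) (heta1 : IsEta1 zeta eta1) :
    ∀ τ : ℂ, 0 < τ.im → ∀ z : ℂ, ¬ InLattice τ z →
    HasDerivAt (fun t => wp t z)
      ((-Complex.I / (4 * (Real.pi : ℂ))) *
        (2 * (zeta τ z - z * eta1 τ) * wpd τ z
          + 4 * (wp τ z - eta1 τ) * wp τ z - (2 / 3) * g2 τ)) τ := by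
  intro τ hτ z hz
  have hη (z : ℂ) (hz : z ∉ (tauPair τ hτ).lattice) : zeta τ (z + 1) = zeta τ z + eta1 τ := by
    rw [heta1 τ hτ z (mt (mem_tauPair_lattice hτ).mpr hz), add_sub_cancel]
  have hzL : z ∉ (tauPair τ hτ).lattice := mt (mem_tauPair_lattice hτ).mp hz
  have heat := heatDefect_eq_zero (hzeta.isZetaFunction hτ) hη hzL
  refine (hasDerivAt_wp hτ hzL).congr_deriv ?_
  rw [wp_eq_weierstrassP hτ, wpd_eq_derivWeierstrassP hτ, g2_eq_g₂ hτ]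
  rw [heatDefect] at heat
  have hπ : (Real.pi : ℂ) ≠ 0 := by exact_mod_cast Real.pi_ne_zero
  field_simp
  linear_combination (-6 * I) * heat + 12 * Real.pi * wpTau τ z * I_sq
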